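/- Let i ≥ 1, L ≥ 1 and nonnegative integers a_1,…,a_i be given, and set K = (i−1)L + Σ_{j=1}^{i} a_j + 1. Consider the side-information digraph of the (a_i,…,a_1)_L-bar-ICP: its vertex set is the set of nodes [K]×[i], with an arc from node (k,t) to node (k',t') if and only if (k',t') ∈ K_k. Then there exists a set S of nodes with |S| = K − (i−1)L + i − 1 such that the subgraph induced on S contains no directed cycle. -/

import Mathlib

open Finset

/-- `<m>_n`: the unique element of `{1,…,n}` congruent to `m` modulo `n`. -/
def angMod (m : ℤ) (n : ℕ) : ℕ :=
  if m % (n : ℤ) = 0 then n else (m % (n : ℤ)).toNat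

/-- The side-information index set `K_k` of user `k` in the
`(a_i,…,a_1)_L`-bar-ICP, as a set of nodes `(b,t)`. -/
def knownIdx (K i L : ℕ) (a : ℕ → ℕ) (k : ℕ) : Set (ℕ × ℕ) :=
  {p | ∃ t ∈ Finset.Icc 1 i, ∃ v ∈ Finset.Icc 1 (i - 1), ∃ r ∈ Finset.Icc 1 L,
    p.2 = t ∧
    p.1 = angMod ((k : ℤ) + (∑ j ∈ Finset.Icc 1 v, (a (angMod ((i : ℤ) + (t : ℤ) - (j : ℤ)) i) : ℤ))
        + ((v : ℤ) - 1) * (L : ℤ) + (r : ℤ)) K}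

/-!
An arc from a node of user `k` into `(b, t)` means `b ≡ k + d [ZMOD K]`, where the displacement `d`
exceeds `c t = a_{<i+t-1>}`, the first summand of the sum in `K_k`, and is less than `K`. An arc
into a node with `b ≤ c t + 1` therefore has to wrap around the cycle `[K]`, and so it lowers the
first coordinate. Hence the nodes `(b, t)` with `1 ≤ b ≤ c t + 1` span no directed cycle, and there
are `∑ t, (c t + 1) = ∑ j, a j + i` of them, since `c` is a cyclic shift of `a`.
-/

section AngMod

variable {n : ℕ}

lemma angMod_mem_Icc (m : ℤ) (hn : 0 < n) : angMod m n ∈ Icc 1 n := by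
  have hlt := Int.emod_lt_of_pos m (Int.natCast_pos.2 hn)
  have hnonneg := Int.emod_nonneg m (Int.natCast_pos.2 hn).ne'
  rw [angMod, mem_Icc]
  split_ifs <;> omega

lemma angMod_modEq (m : ℤ) (hn : 0 < n) : (angMod m n : ℤ) ≡ m [ZMOD n] := by
  rw [angMod]
  split_ifs with h
  · exact (Int.emod_self.trans h.symm : (n : ℤ) % n = m % n)
  · rw [Int.toNat_of_nonneg (Int.emod_nonneg m (Int.natCast_pos.2 hn).ne')]
    exact Int.mod_modEq m n

lemma injOn_angMod_Ico (c : ℤ) (hn : 0 < n) :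
    Set.InjOn (fun m ↦ angMod m n) (Ico c (c + n)) := by
  intro x hx y hy (hxy : angMod x n = angMod y n)
  have hmod : x ≡ y [ZMOD n] := (angMod_modEq x hn).symm.trans (hxy ▸ angMod_modEq y hn)
  rw [coe_Ico, Set.mem_Ico] at hx hy
  have hzero := Int.eq_zero_of_abs_lt_dvd hmod.dvd (abs_lt.2 ⟨by omega, by omega⟩)
  omega

lemma image_angMod_Ico (c : ℤ) (hn : 0 < n) :
    (Ico c (c + n)).image (fun m ↦ angMod m n) = Icc 1 n := by
  refine eq_of_subset_of_card_le (image_subset_iff.2 fun m _ ↦ angMod_mem_Icc m hn) ?_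
  simp [card_image_of_injOn (injOn_angMod_Ico c hn)]

lemma sum_angMod_Ico {M : Type*} [AddCommMonoid M] (c : ℤ) (hn : 0 < n) (a : ℕ → M) :
    ∑ m ∈ Ico c (c + n), a (angMod m n) = ∑ j ∈ Icc 1 n, a j := by
  rw [← image_angMod_Ico c hn, sum_image (injOn_angMod_Ico c hn)]

lemma sum_angMod_sub_le {M : Type*} [AddCommMonoid M] [Preorder M]
    [CanonicallyOrderedAdd M] (c : ℤ) {v : ℕ} (hn : 0 < n) (hv : v ≤ n) (a : ℕ → M) :
    ∑ j ∈ Icc 1 v, a (angMod (c - j) n) ≤ ∑ j ∈ Icc 1 n, a j := by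
  have hinj : Set.InjOn (fun j : ℕ ↦ c - j) (Icc 1 v) := fun x _ y _ hxy ↦ by simpa using hxy
  have hsub : (Icc 1 v).image (fun j : ℕ ↦ c - j) ⊆ Ico (c - n) (c - n + n) := by
    refine image_subset_iff.2 fun j hj ↦ ?_
    rw [mem_Icc] at hj
    rw [mem_Ico]
    omega
  calc ∑ j ∈ Icc 1 v, a (angMod (c - j) n)
      = ∑ m ∈ (Icc 1 v).image (fun j : ℕ ↦ c - j), a (angMod m n) :=
        (sum_image (f := fun m ↦ a (angMod m n)) hinj).symm
    _ ≤ ∑ m ∈ Ico (c - n) (c - n + n), a (angMod m n) := sum_le_sum_of_subset hsub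
    _ = ∑ j ∈ Icc 1 n, a j := sum_angMod_Ico (c - n) hn a

lemma angMod_add_lt_of_le {k d : ℕ} (hk : 0 < k) (hd : d < n) (h : angMod (k + d) n ≤ d) :
    angMod (k + d) n < k := by
  by_contra! hle
  have hdvd := (angMod_modEq (k + d) (by omega : 0 < n)).dvd
  have hzero := Int.eq_zero_of_abs_lt_dvd hdvd (abs_lt.2 ⟨by omega, by omega⟩)
  omega

end AngMod

section ClosedWalk

variable {α β : Type*} [Preorder β] {R : α → α → Prop} {S : Set α}

lemma not_exists_closed_walk_of_lt (rank : α → β)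
    (hrank : ∀ p ∈ S, ∀ q ∈ S, R p q → rank q < rank p) :
    ¬ ∃ (m : ℕ) (f : ℕ → α), 0 < m ∧ (∀ j ≤ m, f j ∈ S) ∧
        (∀ j < m, R (f j) (f (j + 1))) ∧ f m = f 0 := by
  rintro ⟨m, f, hm, hS, hR, hclosed⟩
  have hanti : StrictAntiOn (rank ∘ f) (Set.Iic m) :=
    strictAntiOn_of_succ_lt Set.ordConnected_Iic fun j _ hj hj' ↦
      hrank _ (hS j hj) _ (hS (j + 1) hj') (hR j hj')
  have hlt : rank (f m) < rank (f 0) := hanti (Set.mem_Iic.2 m.zero_le) Set.self_mem_Iic hm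
  exact lt_irrefl _ (hclosed ▸ hlt)

end ClosedWalk

section UnderGraph

variable {ι : Type*} [DecidableEq ι] {s : Finset ι} {h : ι → ℕ}

/-- The lattice points `(b, t)` with `t ∈ s` and `1 ≤ b ≤ h t`, that is, columns of heights `h t`
over the base `s`. The acyclic set of nodes has this form. -/
def underGraph (s : Finset ι) (h : ι → ℕ) : Finset (ℕ × ι) :=
  s.biUnion fun t ↦ Icc 1 (h t) ×ˢ {t}

lemma mem_underGraph {p : ℕ × ι} : p ∈ underGraph s h ↔ p.2 ∈ s ∧ p.1 ∈ Icc 1 (h p.2) := by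
  simp only [underGraph, mem_biUnion, mem_product, mem_singleton]
  exact ⟨fun ⟨_, ht, hb, hp⟩ ↦ hp ▸ ⟨ht, hb⟩, fun ⟨ht, hb⟩ ↦ ⟨p.2, ht, hb, rfl⟩⟩

lemma card_underGraph (s : Finset ι) (h : ι → ℕ) : #(underGraph s h) = ∑ t ∈ s, h t := by
  rw [underGraph, card_biUnion fun t _ u _ htu ↦
    disjoint_product.2 (.inr (disjoint_singleton.2 htu))]
  simp

end UnderGraph

section SideInformation

variable {K i L k : ℕ} {a : ℕ → ℕ}

/-- The number `a_{<i+t-1>}`, the summand `j = 1` of the sums defining the elements of `K_k` with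
second coordinate `t`; it bounds from below how far an arc into a node `(b, t)` moves
along the cycle `[K]`. -/
def leadingGap (i : ℕ) (a : ℕ → ℕ) (t : ℕ) : ℕ :=
  a (angMod (i + t - 1) i)

lemma sum_leadingGap (hi : 0 < i) (a : ℕ → ℕ) :
    ∑ t ∈ Icc 1 i, leadingGap i a t = ∑ j ∈ Icc 1 i, a j := by
  rw [← sum_angMod_Ico i hi a]
  refine sum_bij' (fun t _ ↦ (i + t - 1 : ℤ)) (fun m _ ↦ (m - i + 1).toNat) ?_ ?_ ?_ ?_
    fun t _ ↦ rfl
  all_goals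
    simp only [mem_Icc, mem_Ico]
    omega

lemma leadingGap_le_sum {t : ℕ} (ht : t ∈ Icc 1 i) (a : ℕ → ℕ) :
    leadingGap i a t ≤ ∑ j ∈ Icc 1 i, a j := by
  have hi : 0 < i := nonempty_Icc.1 ⟨t, ht⟩
  rw [← sum_leadingGap hi a]
  exact single_le_sum_of_canonicallyOrdered ht

lemma exists_displacement_of_mem_knownIdx {p : ℕ × ℕ} (hp : p ∈ knownIdx K i L a k) :
    ∃ d : ℕ, leadingGap i a p.2 < d ∧ d ≤ (i - 1) * L + ∑ j ∈ Icc 1 i, a j ∧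
      p.1 = angMod (k + d) K := by
  obtain ⟨t, -, v, hv, r, hr, rfl, hb⟩ := hp
  rw [mem_Icc] at hv hr
  set s := ∑ j ∈ Icc 1 v, a (angMod (i + p.2 - j) i) with hs
  have hlower : leadingGap i a p.2 ≤ s := by
    have := single_le_sum_of_canonicallyOrdered
      (f := fun j : ℕ ↦ a (angMod (i + p.2 - j) i)) (mem_Icc.2 ⟨le_rfl, hv.1⟩)
    simpa only [leadingGap, Nat.cast_one] using this
  have hupper : s ≤ ∑ j ∈ Icc 1 i, a j :=
    sum_angMod_sub_le (i + p.2) (by omega) (by omega) a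
  have hsteps : (v - 1) * L + r ≤ (i - 1) * L :=
    calc (v - 1) * L + r ≤ (v - 1) * L + L := by omega
      _ = v * L := by rw [← Nat.succ_mul, Nat.succ_eq_add_one, Nat.sub_add_cancel hv.1]
      _ ≤ (i - 1) * L := Nat.mul_le_mul_right L hv.2
  refine ⟨s + (v - 1) * L + r, by omega, by omega, ?_⟩
  rw [hb, hs]
  congr 1
  push_cast [Nat.cast_sub hv.1]
  ring

lemma fst_lt_of_mem_knownIdx (hk : 0 < k) (hK : (i - 1) * L + ∑ j ∈ Icc 1 i, a j < K)
    {p : ℕ × ℕ} (hp : p ∈ knownIdx K i L a k) (hle : p.1 ≤ leadingGap i a p.2 + 1) :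
    p.1 < k := by
  obtain ⟨d, hgap, hd, hb⟩ := exists_displacement_of_mem_knownIdx hp
  rw [hb] at hle ⊢
  exact angMod_add_lt_of_le hk (by omega) (by omega)

end SideInformation

/-- the side-information digraph of the `(a_i,…,a_1)_L`-bar-ICP
(with an arc from `(k,t)` to `(k',t')` iff `(k',t') ∈ K_k`) contains a set of
`K − (i−1)L + i − 1` nodes inducing an acyclic subgraph (no directed cycle,
i.e. no nonempty closed walk within the set). -/
theorem stmt9 (i L : ℕ) (hi : 1 ≤ i) (hL : 1 ≤ L) (a : ℕ → ℕ)
    (K : ℕ) (hK : K = (i - 1) * L + (∑ j ∈ Finset.Icc 1 i, a j) + 1) :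
    ∃ S : Finset (ℕ × ℕ),
      (∀ p ∈ S, p.1 ∈ Finset.Icc 1 K ∧ p.2 ∈ Finset.Icc 1 i) ∧
      S.card = K - (i - 1) * L + i - 1 ∧
      ¬ ∃ (m : ℕ) (f : ℕ → ℕ × ℕ), 0 < m ∧ (∀ j ≤ m, f j ∈ S) ∧
          (∀ j < m, f (j + 1) ∈ knownIdx K i L a (f j).1) ∧ f m = f 0 := by
  let S := underGraph (Icc 1 i) fun t ↦ leadingGap i a t + 1
  have hdecr : ∀ p ∈ S, ∀ q ∈ S, q ∈ knownIdx K i L a p.1 → q.1 < p.1 := fun p hp q hq hpq ↦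
    have hp' := mem_Icc.1 (mem_underGraph.1 hp).2
    have hq' := mem_Icc.1 (mem_underGraph.1 hq).2
    fst_lt_of_mem_knownIdx hp'.1 (by omega) hpq hq'.2
  refine ⟨S, fun p hp ↦ ?_, ?_, not_exists_closed_walk_of_lt Prod.fst hdecr⟩
  · obtain ⟨ht, hb⟩ := mem_underGraph.1 hp
    have hgap := leadingGap_le_sum ht a
    rw [mem_Icc] at hb
    exact ⟨mem_Icc.2 ⟨hb.1, by omega⟩, ht⟩
  · rw [card_underGraph, sum_add_distrib, sum_leadingGap hi, sum_const, Nat.card_Icc, smul_eq_mul]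
    omega
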